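/- arXiv:cs/0607099 — 9 statements merged into one kernel-verified Lean document; each statement's English description precedes it below -/
import Mathlib

section
/- Let M1, M2, N1, N2 be positive integers. Then the value V := min{ M1+M2, N1+N2, (max(M1,N1)+max(M1,N2)+M2)/2, (max(M2,N1)+max(M2,N2)+M1)/2, (max(M1,N1)+max(M2,N1)+N2)/2, (max(M1,N2)+max(M2,N2)+N1)/2, (max(M1,N1)+max(M1,N2)+max(M2,N1)+max(M2,N2))/3 } is the greatest element of the set { d11+d12+d21+d22 : (d11,d12,d21,d22) ∈ D_out(M1,M2,N1,N2) }; that is, some point of D_out(M1,M2,N1,N2) has coordinate sum V, and every point of D_out(M1,M2,N1,N2) has coordinate sum at most V. -/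
/-- The outer-bound region on the degrees of freedom of the MIMO X channel, as a
predicate on quadruples of (nonnegative) reals. -/
def Dout (M1 M2 N1 N2 d11 d12 d21 d22 : ℝ) : Prop :=
  0 ≤ d11 ∧ 0 ≤ d12 ∧ 0 ≤ d21 ∧ 0 ≤ d22 ∧
  d11 + d12 + d21 ≤ max N1 M1 ∧
  d11 + d12 + d22 ≤ max N1 M2 ∧
  d11 + d21 + d22 ≤ max N2 M1 ∧
  d12 + d21 + d22 ≤ max N2 M2 ∧
  d11 + d12 ≤ N1 ∧
  d21 + d22 ≤ N2 ∧
  d11 + d21 ≤ M1 ∧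
  d12 + d22 ≤ M2

/-!
In a point of the region with coordinate sum `s`, each coordinate is bounded below: since
`d11 + d12 + d21` is at most `max N1 M1`, the coordinate `d22` is at least `s - max N1 M1`, and so
on. So `s` is attained if and only if some nonnegative `2 × 2` array with total `s` dominates these
lower bounds and has row sums at most `N` and column sums at most `M`. After subtracting the lower
bounds this is a transportation problem, which is solved by an array of rank one as soon as its
capacities are nonnegative and large enough for the total amount. The seven bounds in the minimum
are what guarantees this.
-/

section Transportation

variable {ι κ : Type*} [Fintype ι] [Fintype κ]

/-- A feasible plan of the transportation problem: an array `x` that ships the amount `t` in total,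
at least `l i j` from `i` to `j`, within the row capacities `r` and the column capacities `c`. -/
structure IsTransportPlan {α : Type*} [AddCommMonoid α] [LE α] (l : ι → κ → α) (r : ι → α)
    (c : κ → α) (t : α) (x : ι → κ → α) : Prop where
  lower_le : ∀ i j, l i j ≤ x i j
  row_sum_le : ∀ i, ∑ j, x i j ≤ r i
  col_sum_le : ∀ j, ∑ i, x i j ≤ c j
  sum_eq : ∑ i, ∑ j, x i j = t

variable {𝕜 : Type*} [Field 𝕜] [LinearOrder 𝕜] [IsStrictOrderedRing 𝕜]

theorem exists_isTransportPlan_zero {r : ι → 𝕜} {c : κ → 𝕜} {t : 𝕜} (hr : ∀ i, 0 ≤ r i)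
    (hc : ∀ j, 0 ≤ c j) (ht : 0 ≤ t) (htr : t ≤ ∑ i, r i) (htc : t ≤ ∑ j, c j) :
    ∃ x, IsTransportPlan (fun _ _ ↦ 0) r c t x := by
  obtain rfl | ht := ht.eq_or_lt
  · exact ⟨fun _ _ ↦ 0, by simp, by simpa using hr, by simpa using hc, by simp⟩
  have hR : 0 < ∑ i, r i := ht.trans_le htr
  have hC : 0 < ∑ j, c j := ht.trans_le htc
  have row_sum (i : ι) : ∑ j, t * (r i / ∑ i, r i) * (c j / ∑ j, c j) = t / (∑ i, r i) * r i := by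
    rw [← Finset.mul_sum, ← Finset.sum_div, div_self hC.ne']
    ring
  have col_sum (j : κ) : ∑ i, t * (r i / ∑ i, r i) * (c j / ∑ j, c j) = t / (∑ j, c j) * c j := by
    rw [← Finset.sum_mul, ← Finset.mul_sum, ← Finset.sum_div, div_self hR.ne']
    ring
  refine ⟨fun i j ↦ t * (r i / ∑ i, r i) * (c j / ∑ j, c j),
    fun i j ↦ ?_, fun i ↦ ?_, fun j ↦ ?_, ?_⟩
  · exact mul_nonneg (mul_nonneg ht.le (div_nonneg (hr i) hR.le)) (div_nonneg (hc j) hC.le)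
  · exact (row_sum i).trans_le (mul_le_of_le_one_left (hr i) (div_le_one_of_le₀ htr hR.le))
  · exact (col_sum j).trans_le (mul_le_of_le_one_left (hc j) (div_le_one_of_le₀ htc hC.le))
  · simp_rw [row_sum]
    rw [← Finset.mul_sum, div_mul_cancel₀ t hR.ne']

theorem exists_isTransportPlan {l : ι → κ → 𝕜} {r : ι → 𝕜} {c : κ → 𝕜} {t : 𝕜}
    (hr : ∀ i, ∑ j, l i j ≤ r i) (hc : ∀ j, ∑ i, l i j ≤ c j) (ht : ∑ i, ∑ j, l i j ≤ t)
    (htr : t ≤ ∑ i, r i) (htc : t ≤ ∑ j, c j) : ∃ x, IsTransportPlan l r c t x := by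
  obtain ⟨x, hx⟩ := exists_isTransportPlan_zero (r := fun i ↦ r i - ∑ j, l i j)
    (c := fun j ↦ c j - ∑ i, l i j) (fun i ↦ sub_nonneg.2 (hr i)) (fun j ↦ sub_nonneg.2 (hc j))
    (sub_nonneg.2 ht) (by rw [Finset.sum_sub_distrib]; exact sub_le_sub_right htr _)
    (by rw [Finset.sum_sub_distrib, Finset.sum_comm]; exact sub_le_sub_right htc _)
  refine ⟨fun i j ↦ l i j + x i j, fun i j ↦ le_add_of_nonneg_right (hx.lower_le i j),
    fun i ↦ ?_, fun j ↦ ?_, ?_⟩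
  · rw [Finset.sum_add_distrib]
    exact le_sub_iff_add_le'.1 (hx.row_sum_le i)
  · rw [Finset.sum_add_distrib]
    exact le_sub_iff_add_le'.1 (hx.col_sum_le j)
  · simp_rw [Finset.sum_add_distrib]
    rw [hx.sum_eq, add_sub_cancel]

end Transportation

/-- The bounds on the coordinate sum `s` of a point of the region, for transmitters with `M j` and
receivers with `N i` antennas. The index `j + 1` in `Fin 2` is that of the other transmitter (or
receiver). -/
structure SumBounds (M N : Fin 2 → ℝ) (s : ℝ) : Prop where
  le_sum_left : s ≤ ∑ j, M j
  le_sum_right : s ≤ ∑ i, N i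
  two_mul_le_left : ∀ j, 2 * s ≤ ∑ i, max (M (j + 1)) (N i) + M j
  two_mul_le_right : ∀ i, 2 * s ≤ ∑ j, max (M j) (N (i + 1)) + N i
  three_mul_le : 3 * s ≤ ∑ i, ∑ j, max (M j) (N i)

/-- A lower bound for the coordinate `d i j` (receiver `i`, transmitter `j`) of a point of the
region with coordinate sum `s`: the other three coordinates sum to at most
`max (M (j + 1)) (N (i + 1))`. -/
def coordLowerBound (M N : Fin 2 → ℝ) (s : ℝ) (i j : Fin 2) : ℝ :=
  max 0 (s - max (M (j + 1)) (N (i + 1)))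

theorem coordLowerBound_swap (M N : Fin 2 → ℝ) (s : ℝ) (i j : Fin 2) :
    coordLowerBound N M s j i = coordLowerBound M N s i j := by
  rw [coordLowerBound, coordLowerBound, max_comm (N _)]

theorem max_zero_add_max_zero_le {α : Type*} [AddCommMonoid α] [LinearOrder α] {a b c : α}
    (hc : 0 ≤ c) (ha : a ≤ c) (hb : b ≤ c) (hab : a + b ≤ c) : max 0 a + max 0 b ≤ c := by
  rcases max_choice 0 a with h | h <;> rcases max_choice 0 b with h' | h' <;> simpa [h, h']

theorem IsTransportPlan.dout {M N : Fin 2 → ℝ} {s : ℝ} {d : Fin 2 → Fin 2 → ℝ}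
    (hd : IsTransportPlan (coordLowerBound M N s) N M s d) :
    Dout (M 0) (M 1) (N 0) (N 1) (d 0 0) (d 0 1) (d 1 0) (d 1 1) := by
  have nonneg (i j : Fin 2) : 0 ≤ d i j := (le_max_left _ _).trans (hd.lower_le i j)
  have sub_le (i j : Fin 2) : s - max (N (i + 1)) (M (j + 1)) ≤ d i j :=
    max_comm (M (j + 1)) _ ▸ (le_max_right _ _).trans (hd.lower_le i j)
  obtain ⟨-, row, col, total⟩ := hd
  simp only [Fin.forall_fin_two, Fin.sum_univ_two, Fin.isValue, zero_add, Fin.reduceAdd] at *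
  refine ⟨nonneg.1.1, nonneg.1.2, nonneg.2.1, nonneg.2.2, ?_, ?_, ?_, ?_,
    row.1, row.2, col.1, col.2⟩ <;> linarith

theorem Dout.sumBounds {M N : Fin 2 → ℝ} {d11 d12 d21 d22 : ℝ}
    (hd : Dout (M 0) (M 1) (N 0) (N 1) d11 d12 d21 d22) :
    SumBounds M N (d11 + d12 + d21 + d22) := by
  obtain ⟨-, -, -, -, omit22, omit21, omit12, omit11, row1, row2, col1, col2⟩ := hd
  constructor <;>
    simp only [Fin.forall_fin_two, Fin.sum_univ_two, Fin.isValue, zero_add, Fin.reduceAdd,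
      max_comm (M _)] <;>
    (try constructor) <;> linarith

namespace SumBounds

variable {M N : Fin 2 → ℝ} {s : ℝ}

theorem swap (h : SumBounds M N s) : SumBounds N M s where
  le_sum_left := h.le_sum_right
  le_sum_right := h.le_sum_left
  two_mul_le_left i := by simpa only [max_comm] using h.two_mul_le_right i
  two_mul_le_right j := by simpa only [max_comm] using h.two_mul_le_left j
  three_mul_le := by
    rw [Finset.sum_comm]
    simpa only [max_comm] using h.three_mul_le

theorem row_sum_coordLowerBound_le (h : SumBounds M N s) (hN : ∀ i, 0 ≤ N i) (i : Fin 2) :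
    ∑ j, coordLowerBound M N s i j ≤ N i := by
  have le_add : s ≤ N i + N (i + 1) := by
    have := h.le_sum_right
    fin_cases i <;> simpa [Fin.sum_univ_two, add_comm] using this
  have single_le (j : Fin 2) : s - max (M j) (N (i + 1)) ≤ N i := by
    linarith [le_max_right (M j) (N (i + 1))]
  have add_le : s - max (M 1) (N (i + 1)) + (s - max (M 0) (N (i + 1))) ≤ N i := by
    have two_mul_le := h.two_mul_le_right i
    rw [Fin.sum_univ_two] at two_mul_le
    linarith
  rw [Fin.sum_univ_two]
  exact max_zero_add_max_zero_le (hN i) (single_le 1) (single_le 0) add_le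

theorem col_sum_coordLowerBound_le (h : SumBounds M N s) (hM : ∀ j, 0 ≤ M j) (j : Fin 2) :
    ∑ i, coordLowerBound M N s i j ≤ M j := by
  simpa only [coordLowerBound_swap] using h.swap.row_sum_coordLowerBound_le hM j

theorem sum_coordLowerBound_le (h : SumBounds M N s) (hM : ∀ j, 0 ≤ M j) (hs : 0 ≤ s) :
    ∑ i, ∑ j, coordLowerBound M N s i j ≤ s := by
  have hP (i j : Fin 2) : M j ≤ max (M j) (N i) ∧ N i ≤ max (M j) (N i) :=
    ⟨le_max_left _ _, le_max_right _ _⟩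
  obtain ⟨hsM, hsN, h2M, h2N, h3⟩ := h
  simp only [coordLowerBound, Fin.sum_univ_two, Fin.forall_fin_two, Fin.isValue, zero_add,
    Fin.reduceAdd] at *
  generalize max (M 0) (N 0) = p00 at *
  generalize max (M 0) (N 1) = p01 at *
  generalize max (M 1) (N 0) = p10 at *
  generalize max (M 1) (N 1) = p11 at *
  -- Only positive terms count: `k` of them sum to at most `s` if `(k - 1) * s` is at most the sum
  -- of their `p`. This follows from `s ≤ ∑ M` or `s ≤ ∑ N` if `k = 2`, from a bound on `2 * s` if
  -- `k = 3`, and from the bound on `3 * s` if `k = 4`.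
  rcases max_choice 0 (s - p00) with h00 | h00 <;> rcases max_choice 0 (s - p01) with h01 | h01 <;>
    rcases max_choice 0 (s - p10) with h10 | h10 <;>
    rcases max_choice 0 (s - p11) with h11 | h11 <;>
    rw [h00, h01, h10, h11] <;> linarith

theorem exists_dout (h : SumBounds M N s) (hM : ∀ j, 0 ≤ M j) (hN : ∀ i, 0 ≤ N i) (hs : 0 ≤ s) :
    ∃ d11 d12 d21 d22, Dout (M 0) (M 1) (N 0) (N 1) d11 d12 d21 d22 ∧
      s = d11 + d12 + d21 + d22 := by
  obtain ⟨d, hd⟩ := exists_isTransportPlan (h.row_sum_coordLowerBound_le hN)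
    (h.col_sum_coordLowerBound_le hM) (h.sum_coordLowerBound_le hM hs) h.le_sum_right h.le_sum_left
  exact ⟨d 0 0, d 0 1, d 1 0, d 1 1, hd.dout, by simp [← hd.sum_eq, Fin.sum_univ_two, add_assoc]⟩

end SumBounds

theorem sumBounds_iff_le_min {M1 M2 N1 N2 s : ℝ} :
    SumBounds ![M1, M2] ![N1, N2] s ↔
      s ≤ min (M1 + M2)
        (min (N1 + N2)
          (min ((max M1 N1 + max M1 N2 + M2) / 2)
            (min ((max M2 N1 + max M2 N2 + M1) / 2)
              (min ((max M1 N1 + max M2 N1 + N2) / 2)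
                (min ((max M1 N2 + max M2 N2 + N1) / 2)
                  ((max M1 N1 + max M1 N2 + max M2 N1 + max M2 N2) / 3)))))) := by
  simp only [le_min_iff]
  constructor
  · rintro ⟨hsM, hsN, h2M, h2N, h3⟩
    simp only [Fin.forall_fin_two, Fin.sum_univ_two, Fin.isValue, zero_add, Fin.reduceAdd,
      Matrix.cons_val_zero, Matrix.cons_val_one] at *
    refine ⟨hsM, hsN, ?_, ?_, ?_, ?_, ?_⟩ <;> linarith
  · rintro ⟨hsM, hsN, h2M1, h2M2, h2N1, h2N2, h3⟩
    constructor <;>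
      simp only [Fin.forall_fin_two, Fin.sum_univ_two, Fin.isValue, zero_add, Fin.reduceAdd,
        Matrix.cons_val_zero, Matrix.cons_val_one] <;>
      (try constructor) <;> linarith

theorem stmt_0_general {M1 M2 N1 N2 : ℝ} (hM1 : 0 ≤ M1) (hM2 : 0 ≤ M2)
    (hN1 : 0 ≤ N1) (hN2 : 0 ≤ N2) :
    IsGreatest
      {s : ℝ | ∃ d11 d12 d21 d22 : ℝ,
        Dout M1 M2 N1 N2 d11 d12 d21 d22 ∧
        s = d11 + d12 + d21 + d22}
      (min (M1 + M2)
        (min (N1 + N2)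
          (min ((max M1 N1 + max M1 N2 + M2) / 2)
            (min ((max M2 N1 + max M2 N2 + M1) / 2)
              (min ((max M1 N1 + max M2 N1 + N2) / 2)
                (min ((max M1 N2 + max M2 N2 + N1) / 2)
                  ((max M1 N1 + max M1 N2 + max M2 N1 + max M2 N2) / 3))))))) := by
  have hM : ∀ j, 0 ≤ ![M1, M2] j := Fin.forall_fin_two.2 ⟨hM1, hM2⟩
  have hN : ∀ i, 0 ≤ ![N1, N2] i := Fin.forall_fin_two.2 ⟨hN1, hN2⟩
  constructor
  · exact (sumBounds_iff_le_min.2 le_rfl).exists_dout hM hN (by positivity)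
  · rintro s ⟨d11, d12, d21, d22, hd, rfl⟩
    exact sumBounds_iff_le_min.1 (Dout.sumBounds (M := ![M1, M2]) (N := ![N1, N2]) hd)

theorem stmt_0 (M1 M2 N1 N2 : ℕ) (hM1 : 0 < M1) (hM2 : 0 < M2)
    (hN1 : 0 < N1) (hN2 : 0 < N2) :
    IsGreatest
      {s : ℝ | ∃ d11 d12 d21 d22 : ℝ,
        Dout (M1 : ℝ) (M2 : ℝ) (N1 : ℝ) (N2 : ℝ) d11 d12 d21 d22 ∧
        s = d11 + d12 + d21 + d22}
      (min ((M1 : ℝ) + M2)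
        (min ((N1 : ℝ) + N2)
          (min ((max (M1 : ℝ) N1 + max (M1 : ℝ) N2 + M2) / 2)
            (min ((max (M2 : ℝ) N1 + max (M2 : ℝ) N2 + M1) / 2)
              (min ((max (M1 : ℝ) N1 + max (M2 : ℝ) N1 + N2) / 2)
                (min ((max (M1 : ℝ) N2 + max (M2 : ℝ) N2 + N1) / 2)
                  ((max (M1 : ℝ) N1 + max (M1 : ℝ) N2 + max (M2 : ℝ) N1 +
                      max (M2 : ℝ) N2) / 3))))))) :=
  stmt_0_general M1.cast_nonneg M2.cast_nonneg N1.cast_nonneg N2.cast_nonneg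
end

section
/- For all natural numbers M1, M2, N1, N2, the maximum of the six quantities min(M1+M2, N1), min(M1+M2, N2), min(M1, N1+N2), min(M2, N1+N2), min(M1+M2, N1+N2, max(M1,N2), max(M2,N1)), and min(M1+M2, N1+N2, max(M1,N1), max(M2,N2)) equals min(M1+M2, N1+N2, max(M1, M2, N1, N2)). -/
/-!
The multiple access and broadcast channels alone already attain the right-hand side. Distributivity
merges the truncations `min (M1 + M2) ·` of the receive side into one, and likewise those of the
transmit side; as each side's maximum is at most its sum, the modular law combines the two. The
interference channels only need to be bounded by the right-hand side.
-/

theorem inf_sup_inf_eq_inf_inf_sup {α : Type*} [Lattice α] [IsModularLattice α] {m n s t : α}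
    (hm : m ≤ s) (hn : n ≤ t) : s ⊓ n ⊔ m ⊓ t = s ⊓ (t ⊓ (m ⊔ n)) :=
  calc s ⊓ n ⊔ m ⊓ t
    _ = (s ⊓ n ⊔ m) ⊓ t := (sup_inf_assoc_of_le m (inf_le_of_right_le hn)).symm
    _ = s ⊓ (n ⊔ m) ⊓ t := by rw [inf_sup_assoc_of_le n hm]
    _ = s ⊓ (t ⊓ (m ⊔ n)) := by rw [inf_assoc, inf_comm _ t, sup_comm n m]

theorem stmt_2_general {α : Type*} [DistribLattice α] {m₁ m₂ n₁ n₂ s t : α}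
    (hm₁ : m₁ ≤ s) (hm₂ : m₂ ≤ s) (hn₁ : n₁ ≤ t) (hn₂ : n₂ ≤ t) :
    s ⊓ n₁ ⊔ (s ⊓ n₂ ⊔ (m₁ ⊓ t ⊔ (m₂ ⊓ t ⊔
      (s ⊓ (t ⊓ ((m₁ ⊔ n₂) ⊓ (m₂ ⊔ n₁))) ⊔ s ⊓ (t ⊓ ((m₁ ⊔ n₁) ⊓ (m₂ ⊔ n₂))))))) =
    s ⊓ (t ⊓ (m₁ ⊔ (m₂ ⊔ (n₁ ⊔ n₂)))) := by
  have access_broadcast :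
      s ⊓ (n₁ ⊔ n₂) ⊔ (m₁ ⊔ m₂) ⊓ t = s ⊓ (t ⊓ (m₁ ⊔ (m₂ ⊔ (n₁ ⊔ n₂)))) := by
    rw [inf_sup_inf_eq_inf_inf_sup (sup_le hm₁ hm₂) (sup_le hn₁ hn₂), sup_assoc]
  have interference {n : α} (hn : n ≤ n₁ ⊔ n₂) (b : α) :
      s ⊓ (t ⊓ ((m₁ ⊔ n) ⊓ b)) ≤ s ⊓ (t ⊓ (m₁ ⊔ (m₂ ⊔ (n₁ ⊔ n₂)))) := by
    gcongr
    exact inf_le_left.trans (sup_le_sup_left (le_sup_of_le_right hn) m₁)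
  rw [← sup_assoc, ← inf_sup_left, ← sup_assoc (m₁ ⊓ t), ← inf_sup_right, ← sup_assoc,
    access_broadcast]
  exact sup_eq_left.2 (sup_le (interference le_sup_right _) (interference le_sup_left _))

theorem stmt_2 (M1 M2 N1 N2 : ℕ) :
    max (min (M1 + M2) N1)
      (max (min (M1 + M2) N2)
        (max (min M1 (N1 + N2))
          (max (min M2 (N1 + N2))
            (max (min (M1 + M2) (min (N1 + N2) (min (max M1 N2) (max M2 N1))))
              (min (M1 + M2) (min (N1 + N2) (min (max M1 N1) (max M2 N2)))))))) =
    min (M1 + M2) (min (N1 + N2) (max M1 (max M2 (max N1 N2)))) :=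
  stmt_2_general (Nat.le_add_right M1 M2) (Nat.le_add_left M2 M1)
    (Nat.le_add_right N1 N2) (Nat.le_add_left N2 N1)
end

section
/- Let M1, M2, N1, N2 be positive integers, regarded as real numbers. Then min{ M1+M2, N1+N2, (max(M1,N1)+max(M1,N2)+M2)/2, (max(M2,N1)+max(M2,N2)+M1)/2, (max(M1,N1)+max(M2,N1)+N2)/2, (max(M1,N2)+max(M2,N2)+N1)/2, (max(M1,N1)+max(M1,N2)+max(M2,N1)+max(M2,N2))/3 } ≤ (4/3) · min( M1+M2, N1+N2, max(M1, M2, N1, N2) ). -/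
/-!
The first two terms of the inner bound, `M₁ + M₂` and `N₁ + N₂`, also occur in the outer bound, so
they cost no factor. The factor `4 / 3` comes from the last term of the outer bound: it is a third
of a sum of four pairwise maxima, one per message, and each of them is at most
`max(M₁, M₂, N₁, N₂)`.
-/

theorem sum_pairwise_max_le_four_nsmul_max {G : Type*} [AddCommMonoid G] [LinearOrder G]
    [IsOrderedAddMonoid G] (a b c d : G) :
    max a c + max a d + max b c + max b d ≤ 4 • max a (max b (max c d)) := by
  set m := max a (max b (max c d))
  have ha : a ≤ m := by simp [m]
  have hb : b ≤ m := by simp [m]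
  have hc : c ≤ m := by simp [m]
  have hd : d ≤ m := by simp [m]
  calc
    max a c + max a d + max b c + max b d ≤ m + m + m + m := by
      gcongr <;> apply max_le <;> assumption
    _ = 4 • m := by abel

section Bounds

variable {K : Type*} [Field K] [LinearOrder K]

/-- The linear-programming outer bound `η_out` on the total degrees of freedom of the MIMO X channel
with `M₁`, `M₂` transmit and `N₁`, `N₂` receive antennas. Antenna counts are elements of an ordered
field, so that the divisions are exact. -/
def mimoXOuterBound (M₁ M₂ N₁ N₂ : K) : K :=
  min (M₁ + M₂)
    (min (N₁ + N₂)
      (min ((max M₁ N₁ + max M₁ N₂ + M₂) / 2)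
        (min ((max M₂ N₁ + max M₂ N₂ + M₁) / 2)
          (min ((max M₁ N₁ + max M₂ N₁ + N₂) / 2)
            (min ((max M₁ N₂ + max M₂ N₂ + N₁) / 2)
              ((max M₁ N₁ + max M₁ N₂ + max M₂ N₁ + max M₂ N₂) / 3))))))

/-- The inner bound `η_MBI` on the total degrees of freedom of the MIMO X channel, achieved on the
multiple-access, broadcast and interference channels that it contains. -/
def macBcIcInnerBound (M₁ M₂ N₁ N₂ : K) : K :=
  min (M₁ + M₂) (min (N₁ + N₂) (max M₁ (max M₂ (max N₁ N₂))))

theorem mimoXOuterBound_le_transmit (M₁ M₂ N₁ N₂ : K) :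
    mimoXOuterBound M₁ M₂ N₁ N₂ ≤ M₁ + M₂ :=
  min_le_left _ _

theorem mimoXOuterBound_le_receive (M₁ M₂ N₁ N₂ : K) :
    mimoXOuterBound M₁ M₂ N₁ N₂ ≤ N₁ + N₂ := by
  simp [mimoXOuterBound]

theorem mimoXOuterBound_le_sum_pairwise_max_div_three (M₁ M₂ N₁ N₂ : K) :
    mimoXOuterBound M₁ M₂ N₁ N₂ ≤
      (max M₁ N₁ + max M₁ N₂ + max M₂ N₁ + max M₂ N₂) / 3 := by
  simp only [mimoXOuterBound, min_le_iff, le_refl, or_true]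

variable [IsStrictOrderedRing K]

theorem mimoXOuterBound_le_four_thirds_mul_max (M₁ M₂ N₁ N₂ : K) :
    mimoXOuterBound M₁ M₂ N₁ N₂ ≤ 4 / 3 * max M₁ (max M₂ (max N₁ N₂)) :=
  calc
    mimoXOuterBound M₁ M₂ N₁ N₂
      ≤ (max M₁ N₁ + max M₁ N₂ + max M₂ N₁ + max M₂ N₂) / 3 :=
        mimoXOuterBound_le_sum_pairwise_max_div_three M₁ M₂ N₁ N₂
    _ ≤ (4 • max M₁ (max M₂ (max N₁ N₂))) / 3 := by
        gcongr
        exact sum_pairwise_max_le_four_nsmul_max M₁ M₂ N₁ N₂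
    _ = 4 / 3 * max M₁ (max M₂ (max N₁ N₂)) := by
        rw [nsmul_eq_mul, Nat.cast_ofNat, mul_div_right_comm]

theorem stmt_3_general {M₁ M₂ N₁ N₂ : K} (hM : 0 ≤ M₁ + M₂) (hN : 0 ≤ N₁ + N₂) :
    mimoXOuterBound M₁ M₂ N₁ N₂ ≤ 4 / 3 * macBcIcInnerBound M₁ M₂ N₁ N₂ := by
  have one_le : (1 : K) ≤ 4 / 3 := by norm_num
  have nonneg : (0 : K) ≤ 4 / 3 := by norm_num
  rw [macBcIcInnerBound, mul_min_of_nonneg _ _ nonneg, mul_min_of_nonneg _ _ nonneg]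
  refine le_min ?transmit (le_min ?receive ?largest)
  case transmit =>
    exact (mimoXOuterBound_le_transmit M₁ M₂ N₁ N₂).trans (le_mul_of_one_le_left hM one_le)
  case receive =>
    exact (mimoXOuterBound_le_receive M₁ M₂ N₁ N₂).trans (le_mul_of_one_le_left hN one_le)
  case largest => exact mimoXOuterBound_le_four_thirds_mul_max M₁ M₂ N₁ N₂

end Bounds

theorem stmt_3 (M1 M2 N1 N2 : ℕ) (hM1 : 0 < M1) (hM2 : 0 < M2)
    (hN1 : 0 < N1) (hN2 : 0 < N2) :
    min ((M1 : ℝ) + M2)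
      (min ((N1 : ℝ) + N2)
        (min ((max (M1 : ℝ) N1 + max (M1 : ℝ) N2 + M2) / 2)
          (min ((max (M2 : ℝ) N1 + max (M2 : ℝ) N2 + M1) / 2)
            (min ((max (M1 : ℝ) N1 + max (M2 : ℝ) N1 + N2) / 2)
              (min ((max (M1 : ℝ) N2 + max (M2 : ℝ) N2 + N1) / 2)
                ((max (M1 : ℝ) N1 + max (M1 : ℝ) N2 + max (M2 : ℝ) N1 +
                    max (M2 : ℝ) N2) / 3)))))) ≤
    (4 / 3 : ℝ) *
      min ((M1 : ℝ) + M2)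
        (min ((N1 : ℝ) + N2) (max (M1 : ℝ) (max (M2 : ℝ) (max (N1 : ℝ) N2)))) := by
  exact stmt_3_general (by positivity) (by positivity)
end

section
/- Let M1, M2, N1, N2 be positive integers and let d11, d12, d21, d22 be nonnegative integers such that (d11,d12,d21,d22), viewed as a quadruple of reals, lies in D_out(M1,M2,N1,N2). Writing x⁺ = max(x,0) for integers x, let r1 = (M1−N1)⁺, r2 = (M2−N1)⁺ and r = (M1+M2−N1)⁺ − r1 − r2. Then N1 ≥ d11 + d12 + (d21 − r1)⁺ + (d22 − r2)⁺ − min( (d21 − r1)⁺, (d22 − r2)⁺, r ). -/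
/-!
Let `r₁ = (M₁ - N)⁺`, `r₂ = (M₂ - N)⁺` and `r = (M₁ + M₂ - N)⁺ - r₁ - r₂`. An upper bound on a sum
minus a minimum of three terms is a system of three bounds. Two of them are the constraints
`d₁₁ + d₁₂ + d₂ᵢ ≤ max N Mᵢ`, since `max N Mᵢ = N + rᵢ`. In the third, expanding the positive parts
of `d₂ᵢ - rᵢ` leaves one term that does not follow from the first two bounds and `0 ≤ r`, namely
`d₁₁ + d₁₂ + d₂₁ + d₂₂ ≤ N + r + r₁ + r₂`; its right-hand side is `N + (M₁ + M₂ - N)⁺ ≥ M₁ + M₂`, so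
it is the sum of `d₁₁ + d₂₁ ≤ M₁` and `d₁₂ + d₂₂ ≤ M₂`.
-/

section LatticeOrderedGroup

variable {α : Type*} [AddCommGroup α] [Lattice α] [IsOrderedAddMonoid α]

lemma add_posPart_le_iff {a x c : α} : a + x⁺ ≤ c ↔ a + x ≤ c ∧ a ≤ c := by
  rw [posPart_def, add_sup, sup_le_iff, add_zero]

lemma add_posPart_add_posPart_le_iff {a x y c : α} :
    a + x⁺ + y⁺ ≤ c ↔ a + x⁺ ≤ c ∧ a + y⁺ ≤ c ∧ a + x + y ≤ c := by
  rw [add_posPart_le_iff, add_right_comm, add_posPart_le_iff, add_posPart_le_iff,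
    add_posPart_le_iff, add_right_comm]
  tauto

lemma posPart_sub_add_posPart_sub_le {m₁ m₂ n : α} (hm₁ : 0 ≤ m₁) (hm₂ : 0 ≤ m₂) (hn : 0 ≤ n) :
    (m₁ - n)⁺ + (m₂ - n)⁺ ≤ (m₁ + m₂ - n)⁺ := by
  have h₁ : (m₁ - n)⁺ ≤ (m₁ + m₂ - n)⁺ :=
    posPart_mono (sub_le_sub_right (le_add_of_nonneg_right hm₂) n)
  have h₂ : (m₂ - n)⁺ ≤ (m₁ + m₂ - n)⁺ :=
    posPart_mono (sub_le_sub_right (le_add_of_nonneg_left hm₁) n)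
  have h₁₂ : (m₁ - n) + (m₂ - n) ≤ (m₁ + m₂ - n)⁺ :=
    calc (m₁ - n) + (m₂ - n) = m₁ + m₂ - n - n := by abel
      _ ≤ m₁ + m₂ - n := sub_le_self _ hn
      _ ≤ (m₁ + m₂ - n)⁺ := le_posPart _
  have h := (add_posPart_add_posPart_le_iff (a := (0 : α))).2
    ⟨(zero_add _).trans_le h₁, (zero_add _).trans_le h₂, by rwa [zero_add]⟩
  rwa [zero_add] at h

lemma add_posPart_sub_posPart_sub_le {a d m n : α} (ha : a ≤ n) (had : a + d ≤ n ⊔ m) :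
    a + (d - (m - n)⁺)⁺ ≤ n := by
  rw [sup_comm, sup_eq_add_posPart_sub] at had
  rw [add_posPart_le_iff, ← add_sub_assoc, sub_le_iff_le_add]
  exact ⟨had, ha⟩

lemma add_add_sub_inf_le_iff {a x y r c : α} :
    a + x + y - x ⊓ (y ⊓ r) ≤ c ↔ a + x ≤ c ∧ a + y ≤ c ∧ a + x + y ≤ c + r := by
  have hx : a + x + y - c ≤ x ↔ a + y ≤ c := by
    rw [sub_le_iff_le_add, add_right_comm, add_comm x, add_le_add_iff_right]
  have hy : a + x + y - c ≤ y ↔ a + x ≤ c := by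
    rw [sub_le_iff_le_add, add_comm y, add_le_add_iff_right]
  rw [sub_le_comm, le_inf_iff, le_inf_iff, hx, hy, sub_le_iff_le_add', and_left_comm]

theorem stmt_5_general {M₁ M₂ N d₁₁ d₁₂ d₂₁ d₂₂ : α}
    (hM₁ : 0 ≤ M₁) (hM₂ : 0 ≤ M₂) (hN : 0 ≤ N)
    (h₁ : d₁₁ + d₁₂ + d₂₁ ≤ N ⊔ M₁) (h₂ : d₁₁ + d₁₂ + d₂₂ ≤ N ⊔ M₂)
    (hdN : d₁₁ + d₁₂ ≤ N) (hdM₁ : d₁₁ + d₂₁ ≤ M₁) (hdM₂ : d₁₂ + d₂₂ ≤ M₂) :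
    d₁₁ + d₁₂ + (d₂₁ - (M₁ - N)⁺)⁺ + (d₂₂ - (M₂ - N)⁺)⁺ -
      (d₂₁ - (M₁ - N)⁺)⁺ ⊓
        ((d₂₂ - (M₂ - N)⁺)⁺ ⊓ ((M₁ + M₂ - N)⁺ - (M₁ - N)⁺ - (M₂ - N)⁺)) ≤ N := by
  set r₁ := (M₁ - N)⁺
  set r₂ := (M₂ - N)⁺
  set r := (M₁ + M₂ - N)⁺ - r₁ - r₂ with hr
  have hr_nonneg : 0 ≤ r := by
    rw [hr, sub_sub, sub_nonneg]
    exact posPart_sub_add_posPart_sub_le hM₁ hM₂ hN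
  have hN_le : N ≤ N + r := le_add_of_nonneg_right hr_nonneg
  have hx : d₁₁ + d₁₂ + (d₂₁ - r₁)⁺ ≤ N := add_posPart_sub_posPart_sub_le hdN h₁
  have hy : d₁₁ + d₁₂ + (d₂₂ - r₂)⁺ ≤ N := add_posPart_sub_posPart_sub_le hdN h₂
  have hxy : d₁₁ + d₁₂ + (d₂₁ - r₁) + (d₂₂ - r₂) ≤ N + r :=
    calc d₁₁ + d₁₂ + (d₂₁ - r₁) + (d₂₂ - r₂)
        = (d₁₁ + d₂₁) + (d₁₂ + d₂₂) - r₁ - r₂ := by abel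
      _ ≤ M₁ + M₂ - r₁ - r₂ := by gcongr
      _ = N + ((M₁ + M₂ - N) - r₁ - r₂) := by abel
      _ ≤ N + r := by rw [hr]; gcongr; exact le_posPart _
  exact add_add_sub_inf_le_iff.2
    ⟨hx, hy, add_posPart_add_posPart_le_iff.2 ⟨hx.trans hN_le, hy.trans hN_le, hxy⟩⟩

end LatticeOrderedGroup

theorem stmt_5 (M1 M2 N1 N2 : ℤ) (hM1 : 0 < M1) (hM2 : 0 < M2)
    (hN1 : 0 < N1) (hN2 : 0 < N2)
    (d11 d12 d21 d22 : ℤ) (h11 : 0 ≤ d11) (h12 : 0 ≤ d12) (h21 : 0 ≤ d21)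
    (h22 : 0 ≤ d22)
    (hD : Dout (M1 : ℝ) (M2 : ℝ) (N1 : ℝ) (N2 : ℝ)
      (d11 : ℝ) (d12 : ℝ) (d21 : ℝ) (d22 : ℝ)) :
    N1 ≥ d11 + d12 + max (d21 - max (M1 - N1) 0) 0 + max (d22 - max (M2 - N1) 0) 0 -
      min (max (d21 - max (M1 - N1) 0) 0)
        (min (max (d22 - max (M2 - N1) 0) 0)
          (max (M1 + M2 - N1) 0 - max (M1 - N1) 0 - max (M2 - N1) 0)) := by
  obtain ⟨-, -, -, -, h₁, h₂, -, -, hdN, -, hdM₁, hdM₂⟩ := hD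
  exact stmt_5_general hM1.le hM2.le hN1.le (mod_cast h₁) (mod_cast h₂) (mod_cast hdN)
    (mod_cast hdM₁) (mod_cast hdM₂)
end

section
/- Let n be a positive integer, let α be a type, and let f : Fin (3n) → α be a function such that every value is attained at most 2n times, i.e., for every a : α the cardinality of {i : Fin (3n) | f i = a} is at most 2n. Then there exists a permutation σ of Fin (3n) such that for every k < n, f(σ(3k)) ≠ f(σ(3k+1)) and f(σ(3k)) ≠ f(σ(3k+2)). -/
/-!
Sort the `3 * n` entries by an arbitrary linear order on the values, so that equal values are
contiguous, and group the entries at positions `k`, `k + n`, `k + 2 * n`. Positions `k` and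
`k + 2 * n` carry different values, since otherwise the `2 * n + 1` entries between them would all
be equal. The middle entry equals at most one of the two outer ones, so one of the outer entries
differs from both others and can be put first.
-/

lemma ncard_Icc_le_ncard_fiber_of_monotone {ι α : Type*} [Preorder ι] [PartialOrder α]
    {f : ι → α} (hf : Monotone f) {i j : ι} (hij : f i = f j) (hfin : (f ⁻¹' {f i}).Finite) :
    (Set.Icc i j).ncard ≤ (f ⁻¹' {f i}).ncard :=
  Set.ncard_le_ncard ((Set.ordConnected_singleton.preimage_mono hf).out rfl hij.symm) hfin

lemma exists_perm_forall_ne_of_add_le {N d : ℕ} {α : Type*} (f : Fin N → α)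
    (hf : ∀ a : α, Nat.card {i : Fin N // f i = a} ≤ d) :
    ∃ σ : Equiv.Perm (Fin N), ∀ i j : Fin N, (i : ℕ) + d ≤ j → f (σ i) ≠ f (σ j) := by
  obtain ⟨_, _⟩ := exists_wellFoundedLT α
  let σ := Tuple.sort f
  refine ⟨σ, fun i j hij heq => ?_⟩
  have hfiber : ((f ∘ σ) ⁻¹' {f (σ i)}).ncard ≤ d :=
    (Nat.card_congr (σ.subtypeEquiv fun _ => Iff.rfl)).trans_le (hf (f (σ i)))
  have hIcc : (Set.Icc i j).ncard = j + 1 - i := by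
    rw [← Finset.coe_Icc, Set.ncard_coe_finset, Fin.card_Icc]
  have hle : (Set.Icc i j).ncard ≤ ((f ∘ σ) ⁻¹' {f (σ i)}).ncard :=
    ncard_Icc_le_ncard_fiber_of_monotone (Tuple.monotone_sort f) heq (Set.toFinite _)
  omega

lemma exists_perm_fin_three_zero_ne_of_ne {α : Type*} (v : Fin 3 → α) (hv : v 0 ≠ v 2) :
    ∃ τ : Equiv.Perm (Fin 3), v (τ 0) ≠ v (τ 1) ∧ v (τ 0) ≠ v (τ 2) := by
  by_cases h : v 0 = v 1
  · have hswap : Equiv.swap (0 : Fin 3) 2 1 = 1 := by decide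
    refine ⟨Equiv.swap 0 2, ?_⟩
    rw [Equiv.swap_apply_left, Equiv.swap_apply_right, hswap, ← h]
    exact ⟨hv.symm, hv.symm⟩
  · exact ⟨Equiv.refl _, h, hv⟩

lemma exists_perm_prod_fin_three_zero_ne_of_ne {ι α : Type*} (v : ι × Fin 3 → α)
    (hv : ∀ k, v (k, 0) ≠ v (k, 2)) :
    ∃ τ : Equiv.Perm (ι × Fin 3), ∀ k,
      v (τ (k, 0)) ≠ v (τ (k, 1)) ∧ v (τ (k, 0)) ≠ v (τ (k, 2)) := by
  choose τ hτ using fun k => exists_perm_fin_three_zero_ne_of_ne (fun r => v (k, r)) (hv k)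
  exact ⟨Equiv.prodCongrRight τ, hτ⟩

theorem stmt_6 (n : ℕ) (hn : 0 < n) {α : Type*} (f : Fin (3 * n) → α)
    (hf : ∀ a : α, Nat.card {i : Fin (3 * n) // f i = a} ≤ 2 * n) :
    ∃ σ : Equiv.Perm (Fin (3 * n)), ∀ k : ℕ, ∀ hk : k < n,
      f (σ ⟨3 * k, by omega⟩) ≠ f (σ ⟨3 * k + 1, by omega⟩) ∧
      f (σ ⟨3 * k, by omega⟩) ≠ f (σ ⟨3 * k + 2, by omega⟩) := by
  obtain ⟨s, hs⟩ := exists_perm_forall_ne_of_add_le f hf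
  let consecutive : Fin n × Fin 3 ≃ Fin (3 * n) := finProdFinEquiv.trans (finCongr (mul_comm n 3))
  let spaced : Fin n × Fin 3 ≃ Fin (3 * n) := (Equiv.prodComm _ _).trans finProdFinEquiv
  have hends (k : Fin n) : f (s (spaced (k, 0))) ≠ f (s (spaced (k, 2))) :=
    hs _ _ (by simp [spaced, mul_comm])
  obtain ⟨τ, hτ⟩ := exists_perm_prod_fin_three_zero_ne_of_ne (fun p => f (s (spaced p))) hends
  refine ⟨consecutive.symm.trans (τ.trans (spaced.trans s)), fun k hk => ?_⟩
  have hsymm (r : Fin 3) : consecutive.symm ⟨3 * k + r, by omega⟩ = (⟨k, hk⟩, r) :=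
    consecutive.symm_apply_eq.mpr (Fin.ext (add_comm _ _))
  have h0 : consecutive.symm ⟨3 * k, by omega⟩ = (⟨k, hk⟩, 0) := hsymm 0
  have h1 : consecutive.symm ⟨3 * k + 1, by omega⟩ = (⟨k, hk⟩, 1) := hsymm 1
  have h2 : consecutive.symm ⟨3 * k + 2, by omega⟩ = (⟨k, hk⟩, 2) := hsymm 2
  simpa only [Equiv.trans_apply, h0, h1, h2] using hτ ⟨k, hk⟩
end

section
/- Let M be a positive integer and let λ : Fin M → Fin 3 → ℂ. Define complex matrices A and B, each with rows indexed by Fin M × Fin 3 and columns indexed by Fin 3 × Fin M, as follows. A has entries: A[(i,r),(0,j)] = 1 if i = j and r ≠ 2, else 0; A[(i,r),(1,j)] = λ i r if i = j and r ≠ 2, else 0; A[(i,r),(2,j)] = 1 if i = j and r ≠ 1, else 0. B has entries: B[(i,r),(0,j)] = 1 if i = j and r ≠ 1, else 0; B[(i,r),(1,j)] = (λ i r)⁻¹ if i = j and r ≠ 1, else 0; B[(i,r),(2,j)] = 1 if i = j and r ≠ 2, else 0. If for every i one has λ i 0 ≠ λ i 1, then A is invertible; and if in addition λ i r ≠ 0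 for all i, r and λ i 0 ≠ λ i 2 for every i, then B is invertible. -/
/-!
After regrouping the columns by `i`, the matrix `[V, Λ V, W]` becomes block diagonal, and its `i`-th
block is the `3 × 3` matrix with columns `v`, `Λᵢ v`, `w`. For `v = (1, 1, 0)` and `w = (1, 0, 1)`
the determinant of this block is `λ i 1 - λ i 0`; exchanging `v` and `w` and inverting `Λ` turns it
into `(λ i 0)⁻¹ - (λ i 2)⁻¹`.
-/

open Matrix

section TwoSidedInverse

variable {m n o R : Type*} [Fintype m] [DecidableEq m] [Fintype n] [DecidableEq n]
  [Fintype o] [DecidableEq o]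

theorem exists_inverse_submatrix_equiv_iff [Semiring R] (N : Matrix o o R) (e : m ≃ o)
    (f : n ≃ o) :
    (∃ C : Matrix n m R, N.submatrix e f * C = 1 ∧ C * N.submatrix e f = 1) ↔ IsUnit N := by
  rw [isUnit_iff_exists]
  constructor
  · rintro ⟨C, hNC, hCN⟩
    refine ⟨C.submatrix f.symm e.symm, ?_, ?_⟩
    · simpa [hNC] using submatrix_mul_equiv (N.submatrix e f) C e.symm f.symm e.symm
    · simpa [hCN] using submatrix_mul_equiv C (N.submatrix e f) f.symm e.symm f.symm
  · rintro ⟨C, hNC, hCN⟩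
    refine ⟨C.submatrix f e, ?_, ?_⟩
    · rw [submatrix_mul_equiv, hNC, submatrix_one_equiv]
    · rw [submatrix_mul_equiv, hCN, submatrix_one_equiv]

theorem isUnit_blockDiagonal_iff [CommRing R] (N : o → Matrix n n R) :
    IsUnit (blockDiagonal N) ↔ ∀ k, IsUnit (N k) := by
  simp only [isUnit_iff_isUnit_det, det_blockDiagonal, IsUnit.prod_univ_iff]

end TwoSidedInverse

section Krylov

variable {ι n R : Type*} [CommRing R]

/-- The matrix with columns `v`, `Λ v`, `w`, where `Λ` is the diagonal matrix with diagonal `x`: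
a Krylov pair of `Λ` completed by the column `w`. -/
def krylovBlock (x v w : n → R) : Matrix n (Fin 3) R :=
  of fun r ↦ ![v r, x r * v r, w r]

theorem det_krylovBlock (x v w : Fin 3 → R) :
    (krylovBlock x v w).det =
      w 0 * (v 1 * v 2) * (x 2 - x 1) - w 1 * (v 0 * v 2) * (x 2 - x 0)
        + w 2 * (v 0 * v 1) * (x 1 - x 0) := by
  simp only [det_fin_three, krylovBlock, of_apply, cons_val]
  ring

theorem det_krylovBlock_110_101 (x : Fin 3 → R) :
    (krylovBlock x ![1, 1, 0] ![1, 0, 1]).det = x 1 - x 0 := by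
  simp [det_krylovBlock]

theorem det_krylovBlock_101_110 (x : Fin 3 → R) :
    (krylovBlock x ![1, 0, 1] ![1, 1, 0]).det = x 0 - x 2 := by
  simp [det_krylovBlock]

variable [DecidableEq ι]

/-- The matrix `[V, Λ V, W]`, where `V` and `W` are block diagonal with every block equal to the
column `v`, respectively `w`, and `Λ` is the diagonal matrix with entries `lam i r`. Its rows are
indexed by (block, position) but its columns by (position, block), hence the swap. -/
def krylovMatrix (lam : ι → n → R) (v w : n → R) : Matrix (ι × n) (Fin 3 × ι) R :=
  (blockDiagonal fun i ↦ krylovBlock (lam i) v w).submatrix Prod.swap id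

theorem krylovMatrix_apply (lam : ι → n → R) (v w : n → R) (i j : ι) (r : n) (b : Fin 3) :
    krylovMatrix lam v w (i, r) (b, j) =
      if i = j then ![v r, lam i r * v r, w r] b else 0 := by
  simp only [krylovMatrix, krylovBlock, submatrix_apply, Prod.swap_prod_mk, id_eq,
    blockDiagonal_apply, of_apply]

theorem exists_inverse_krylovMatrix_iff [Fintype ι] (lam : ι → Fin 3 → R) (v w : Fin 3 → R) :
    (∃ C : Matrix (Fin 3 × ι) (ι × Fin 3) R,
      krylovMatrix lam v w * C = 1 ∧ C * krylovMatrix lam v w = 1) ↔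
      ∀ i, IsUnit (krylovBlock (lam i) v w).det := by
  simp only [← isUnit_iff_isUnit_det]
  rw [← isUnit_blockDiagonal_iff]
  exact exists_inverse_submatrix_equiv_iff _ (Equiv.prodComm ι (Fin 3)) (Equiv.refl _)

end Krylov

theorem stmt_7_general {ι K : Type*} [Fintype ι] [DecidableEq ι] [Field K] (lam : ι → Fin 3 → K)
    (A B : Matrix (ι × Fin 3) (Fin 3 × ι) K)
    (hA : ∀ (i : ι) (r : Fin 3) (b : Fin 3) (j : ι),
      A (i, r) (b, j) =
        if b = 0 then (if i = j ∧ r ≠ 2 then 1 else 0)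
        else if b = 1 then (if i = j ∧ r ≠ 2 then lam i r else 0)
        else (if i = j ∧ r ≠ 1 then 1 else 0))
    (hB : ∀ (i : ι) (r : Fin 3) (b : Fin 3) (j : ι),
      B (i, r) (b, j) =
        if b = 0 then (if i = j ∧ r ≠ 1 then 1 else 0)
        else if b = 1 then (if i = j ∧ r ≠ 1 then (lam i r)⁻¹ else 0)
        else (if i = j ∧ r ≠ 2 then 1 else 0)) :
    ((∃ A' : Matrix (Fin 3 × ι) (ι × Fin 3) K, A * A' = 1 ∧ A' * A = 1) ↔
      ∀ i, lam i 0 ≠ lam i 1) ∧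
    ((∀ i r, lam i r ≠ 0) →
      ((∃ B' : Matrix (Fin 3 × ι) (ι × Fin 3) K, B * B' = 1 ∧ B' * B = 1) ↔
        ∀ i, lam i 0 ≠ lam i 2)) := by
  have A_eq : A = krylovMatrix lam ![1, 1, 0] ![1, 0, 1] := by
    ext ⟨i, r⟩ ⟨b, j⟩
    rw [hA, krylovMatrix_apply]
    fin_cases r <;> fin_cases b <;> simp
  have B_eq : B = krylovMatrix (fun i r ↦ (lam i r)⁻¹) ![1, 0, 1] ![1, 1, 0] := by
    ext ⟨i, r⟩ ⟨b, j⟩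
    rw [hB, krylovMatrix_apply]
    fin_cases r <;> fin_cases b <;> simp
  constructor
  · rw [A_eq, exists_inverse_krylovMatrix_iff]
    refine forall_congr' fun i ↦ ?_
    rw [det_krylovBlock_110_101, isUnit_iff_ne_zero, sub_ne_zero, ne_comm]
  · intro lam_ne_zero
    rw [B_eq, exists_inverse_krylovMatrix_iff]
    refine forall_congr' fun i ↦ ?_
    have h₀₂ : lam i 0 * lam i 2 ≠ 0 := mul_ne_zero (lam_ne_zero i 0) (lam_ne_zero i 2)
    rw [det_krylovBlock_101_110, inv_sub_inv (lam_ne_zero i 0) (lam_ne_zero i 2),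
      isUnit_iff_ne_zero, div_ne_zero_iff, and_iff_left h₀₂, sub_ne_zero, ne_comm]

theorem stmt_7 (M : ℕ) (hM : 0 < M) (lam : Fin M → Fin 3 → ℂ)
    (A B : Matrix (Fin M × Fin 3) (Fin 3 × Fin M) ℂ)
    (hA : ∀ (i : Fin M) (r : Fin 3) (b : Fin 3) (j : Fin M),
      A (i, r) (b, j) =
        if b = 0 then (if i = j ∧ r ≠ 2 then 1 else 0)
        else if b = 1 then (if i = j ∧ r ≠ 2 then lam i r else 0)
        else (if i = j ∧ r ≠ 1 then 1 else 0))
    (hB : ∀ (i : Fin M) (r : Fin 3) (b : Fin 3) (j : Fin M),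
      B (i, r) (b, j) =
        if b = 0 then (if i = j ∧ r ≠ 1 then 1 else 0)
        else if b = 1 then (if i = j ∧ r ≠ 1 then (lam i r)⁻¹ else 0)
        else (if i = j ∧ r ≠ 2 then 1 else 0)) :
    ((∀ i, lam i 0 ≠ lam i 1) →
      ∃ A' : Matrix (Fin 3 × Fin M) (Fin M × Fin 3) ℂ, A * A' = 1 ∧ A' * A = 1) ∧
    ((∀ i, lam i 0 ≠ lam i 1) → (∀ i r, lam i r ≠ 0) → (∀ i, lam i 0 ≠ lam i 2) →
      ∃ B' : Matrix (Fin 3 × Fin M) (Fin M × Fin 3) ℂ, B * B' = 1 ∧ B' * B = 1) := by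
  obtain ⟨hA', hB'⟩ := stmt_7_general lam A B hA hB
  exact ⟨hA'.2, fun _ lam_ne_zero ↦ (hB' lam_ne_zero).2⟩
end

section
/- Let M be a positive integer and let F be an M×M complex matrix such that F = E * diagonal(μ) * E⁻¹ for some invertible M×M complex matrix E and some μ : Fin M → ℂ with μ i ≠ 0 for all i and such that for every c : ℂ, 3 · card{ i : Fin M | μ i = c } ≤ 2M. Let F̄ denote the 3M×3M block-diagonal matrix (rows and columns indexed by Fin 3 × Fin M) with F in each of the three diagonal blocks: F̄[(r,i),(s,j)] = F i j if r = s, else 0. Then F̄ is invertible, and there exist matrices V11 and V21 of size (Fin 3 × Fin M) × (Fin M) over ℂ such that both of the following 3M×3M matrices are invertible: (a) the matrix whose three column blocks are V11, F̄ * V11, and V21; (b) the matrix whose three column blocks are V21, F̄⁻¹ * V21, and V11. -/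
/-!
In an eigenbasis the extended channel `I₃ ⊗ F` is diagonal. Since no eigenvalue belongs to more than
two thirds of the `3 * M` basis vectors, sorting the basis by eigenvalue (in any linear order) and
pairing position `k` with position `k + 2 * M` splits it into `M` triples, in each of which the
first and the last eigenvalue differ. On a triple with eigenvalues `a₀, a₁, a₂` the choice
`V₁₁ = (1, 0, 1)`, `V₂₁ = (1, 1, 1)` gives

  `det [V₁₁, a V₁₁, V₂₁] = a₀ - a₂`  and  `det [V₂₁, a⁻¹ V₂₁, V₁₁] = a₂⁻¹ - a₀⁻¹`,

both nonzero, and the two block matrices are block diagonal with these blocks.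
-/

open Matrix
open scoped Kronecker Finset

section Rearrangement

variable {α β : Type*}

lemma card_Icc_le_card_fiber_of_monotone [Preorder α] [LocallyFiniteOrder α] [Finite α]
    [PartialOrder β] {f : α → β} (hf : Monotone f) {i j : α} (hij : f i = f j) :
    #(Finset.Icc i j) ≤ Nat.card {t // f t = f i} := by
  rw [← Nat.card_eq_finsetCard]
  refine Finite.card_le_of_embedding (Subtype.impEmbedding _ _ fun t ht => ?_)
  obtain ⟨hit, htj⟩ := Finset.mem_Icc.1 ht
  exact ((hf htj).trans_eq hij.symm).antisymm (hf hit)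

lemma exists_equiv_fin_monotone_comp [Fintype α] [LinearOrder β] {N : ℕ}
    (hN : Fintype.card α = N) (f : α → β) : ∃ e : Fin N ≃ α, Monotone (f ∘ e) :=
  let e₀ := (Fintype.equivFinOfCardEq hN).symm
  ⟨(Tuple.sort (f ∘ e₀)).trans e₀, Tuple.monotone_sort (f ∘ e₀)⟩

lemma exists_equiv_forall_apply_zero_ne_apply_last [Fintype α] {n : Type*} [Fintype n] {l : ℕ}
    (hα : Fintype.card α = (l + 1) * Fintype.card n) (f : α → β)
    (hf : ∀ c, Nat.card {x // f x = c} ≤ l * Fintype.card n) :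
    ∃ e : Fin (l + 1) × n ≃ α, ∀ k, f (e (0, k)) ≠ f (e (Fin.last l, k)) := by
  obtain ⟨_, -⟩ := exists_wellFoundedLT (α := β)
  obtain ⟨s, hs⟩ := exists_equiv_fin_monotone_comp hα f
  let position : Fin (l + 1) × n ≃ Fin ((l + 1) * Fintype.card n) :=
    ((Equiv.refl _).prodCongr (Fintype.equivFin n)).trans finProdFinEquiv
  refine ⟨position.trans s, fun k hk => ?_⟩
  have hshift : (position (Fin.last l, k) : ℕ) = position (0, k) + l * Fintype.card n := by
    simp [position, mul_comm]
  have hfiber : Nat.card {t // f (s t) = f (s (position (0, k)))} ≤ l * Fintype.card n :=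
    (Nat.card_congr (s.subtypeEquiv fun _ => Iff.rfl)).trans_le (hf _)
  have hIcc := card_Icc_le_card_fiber_of_monotone hs hk
  simp only [Function.comp_apply, Fin.card_Icc, hshift] at hIcc
  omega

lemma card_fiber_comp_snd {γ : Type*} (f : α → β) (c : β) :
    Nat.card {p : γ × α // f p.2 = c} = Nat.card γ * Nat.card {i // f i = c} := by
  rw [← Nat.card_prod]
  exact Nat.card_congr
    { toFun := fun p => (p.1.1, ⟨p.1.2, p.2⟩)
      invFun := fun q => ⟨(q.1, q.2.1), q.2.2⟩ }

end Rearrangement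

section ThreeCols

variable {m n R : Type*}

/-- The matrix with column blocks `X`, `Y`, `Z`. It is spelled with `if` so that the block
matrices of `stmt_8` unfold to it. -/
def threeCols (X Y Z : Matrix m n R) : Matrix m (Fin 3 × n) R :=
  of fun p q => if q.1 = 0 then X p q.2 else if q.1 = 1 then Y p q.2 else Z p q.2

/-- The matrix `v ⊗ 1`: scalar row blocks `v l • 1`, stacked on top of each other. -/
def stackScalar {ι : Type*} (n : Type*) [DecidableEq n] [Zero R] (v : ι → R) : Matrix (ι × n) n R :=
  of fun p j => if p.2 = j then v p.1 else 0

/-- The `3 × 3` matrix with columns `v`, `diag(a) v`, `w`: what `[V, G V, W]` becomes on three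
eigenvectors of `G` with eigenvalues `a`. -/
def eigenvalueBlock [Mul R] (a v w : Fin 3 → R) : Matrix (Fin 3) (Fin 3) R :=
  of fun l => ![v l, a l * v l, w l]

lemma mul_threeCols {l : Type*} [Fintype m] [NonUnitalNonAssocSemiring R] (A : Matrix l m R)
    (X Y Z : Matrix m n R) : A * threeCols X Y Z = threeCols (A * X) (A * Y) (A * Z) := by
  ext p ⟨r, j⟩
  fin_cases r <;> simp [threeCols, mul_apply]

variable [Fintype n] [DecidableEq n]

lemma threeCols_stackScalar [NonUnitalNonAssocSemiring R] (d : Fin 3 × n → R) (v w : Fin 3 → R) :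
    threeCols (stackScalar n v) (diagonal d * stackScalar n v) (stackScalar n w) =
      blockDiagonal fun k => eigenvalueBlock (fun l => d (l, k)) v w := by
  ext ⟨l, k⟩ ⟨r, k'⟩
  fin_cases r <;> simp [threeCols, stackScalar, eigenvalueBlock, blockDiagonal_apply, diagonal_mul]

variable [CommRing R] {P G : Matrix (Fin 3 × n) (Fin 3 × n) R} {d : Fin 3 × n → R}

lemma isUnit_threeCols_of_mul_eq_mul_diagonal (hP : IsUnit P) (hG : G * P = P * diagonal d)
    {v w : Fin 3 → R} (h : ∀ k, IsUnit (det (eigenvalueBlock (fun l => d (l, k)) v w))) :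
    IsUnit (threeCols (P * stackScalar n v) (G * (P * stackScalar n v)) (P * stackScalar n w)) := by
  have hfactor : threeCols (P * stackScalar n v) (G * (P * stackScalar n v)) (P * stackScalar n w) =
      P * threeCols (stackScalar n v) (diagonal d * stackScalar n v) (stackScalar n w) := by
    rw [mul_threeCols, ← Matrix.mul_assoc G, hG, Matrix.mul_assoc]
  rw [hfactor, threeCols_stackScalar]
  refine hP.mul ((isUnit_iff_isUnit_det _).2 ?_)
  rwa [det_blockDiagonal, IsUnit.prod_univ_iff]

lemma det_eigenvalueBlock_one_right (a : Fin 3 → R) :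
    det (eigenvalueBlock a ![1, 0, 1] 1) = a 0 - a 2 := by
  simp [eigenvalueBlock, det_fin_three, sub_eq_neg_add]

lemma det_eigenvalueBlock_one_left (a : Fin 3 → R) :
    det (eigenvalueBlock a 1 ![1, 0, 1]) = a 2 - a 0 := by
  simp only [eigenvalueBlock, det_fin_three, of_apply, cons_val, Pi.one_apply]
  ring

end ThreeCols

section Diagonalization

lemma isUnit_iff_of_mul_eq_mul {A : Type*} [Monoid A] {p a b : A} (hp : IsUnit p)
    (h : a * p = p * b) : IsUnit a ↔ IsUnit b := by
  rw [← hp.mul_right_iff, h, hp.mul_left_iff]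

variable {R m n : Type*} [Fintype m] [DecidableEq m] [Fintype n] [DecidableEq n]

lemma inv_mul_eq_mul_inv_of_mul_eq_mul [CommRing R] {P G D : Matrix m m R} (hP : IsUnit P)
    (hG : G * P = P * D) : G⁻¹ * P = P * D⁻¹ := by
  have hdet : IsUnit P.det := (isUnit_iff_isUnit_det P).1 hP
  have hconj : G = P * D * P⁻¹ := by rw [← hG, mul_nonsing_inv_cancel_right _ _ hdet]
  rw [hconj, Matrix.mul_inv_rev, Matrix.mul_inv_rev, nonsing_inv_nonsing_inv _ hdet,
    Matrix.mul_assoc, nonsing_inv_mul_cancel_right _ _ hdet]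

lemma mul_submatrix_eq_submatrix_mul_diagonal [NonUnitalNonAssocSemiring R]
    {P G : Matrix m m R} {d : m → R} (hG : G * P = P * diagonal d) (e : n ≃ m) :
    G * P.submatrix id e = P.submatrix id e * diagonal (d ∘ e) := by
  rw [← submatrix_diagonal_equiv, submatrix_mul_equiv, ← hG]
  rfl

lemma one_kronecker_mul_eq_mul_diagonal [CommSemiring R] {F E : Matrix n n R} {μ : n → R}
    (hF : F * E = E * diagonal μ) :
    ((1 : Matrix m m R) ⊗ₖ F) * ((1 : Matrix m m R) ⊗ₖ E) =
      ((1 : Matrix m m R) ⊗ₖ E) * diagonal fun p => μ p.2 := by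
  have hdiag : (1 : Matrix m m R) ⊗ₖ diagonal μ = diagonal fun p => μ p.2 := by
    simp [← diagonal_one, diagonal_kronecker_diagonal]
  rw [← hdiag, ← mul_kronecker_mul, ← mul_kronecker_mul, hF]

lemma isUnit_kronecker [CommRing R] {A : Matrix m m R} {B : Matrix n n R} (hA : IsUnit A)
    (hB : IsUnit B) : IsUnit (A ⊗ₖ B) := by
  rw [isUnit_iff_isUnit_det] at hA hB ⊢
  rw [det_kronecker]
  exact (hA.pow _).mul (hB.pow _)

end Diagonalization

section EigenvalueMultiplicity

variable {K n : Type*} [Field K] [Fintype n] [DecidableEq n]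

theorem exists_isUnit_threeCols_of_card_eigenvalue_le {P G : Matrix (Fin 3 × n) (Fin 3 × n) K}
    {d : Fin 3 × n → K} (hP : IsUnit P) (hG : G * P = P * diagonal d) (hd : ∀ p, d p ≠ 0)
    (hcard : ∀ c, Nat.card {p // d p = c} ≤ 2 * Fintype.card n) :
    ∃ V W : Matrix (Fin 3 × n) n K,
      IsUnit (threeCols V (G * V) W) ∧ IsUnit (threeCols W (G⁻¹ * W) V) := by
  obtain ⟨e, he⟩ := exists_equiv_forall_apply_zero_ne_apply_last (by simp) d hcard
  have hQ : IsUnit (P.submatrix id e) := (isUnit_submatrix_equiv (.refl _) e).2 hP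
  have hGQ := mul_submatrix_eq_submatrix_mul_diagonal hG e
  have hGQ' : G⁻¹ * P.submatrix id e = P.submatrix id e * diagonal fun p => (d (e p))⁻¹ := by
    rw [inv_mul_eq_mul_inv_of_mul_eq_mul hQ hGQ]
    congr 1
    exact inv_eq_right_inv (by simp [hd])
  refine ⟨_, _, isUnit_threeCols_of_mul_eq_mul_diagonal hQ hGQ (v := ![1, 0, 1]) (w := 1) ?_,
    isUnit_threeCols_of_mul_eq_mul_diagonal hQ hGQ' ?_⟩ <;> intro k
  · rw [det_eigenvalueBlock_one_right]
    exact (sub_ne_zero.2 (he k)).isUnit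
  · rw [det_eigenvalueBlock_one_left]
    exact (sub_ne_zero.2 fun h => he k (inv_injective h).symm).isUnit

theorem stmt_8_general {F E : Matrix n n K} {μ : n → K} (hE : IsUnit E)
    (hF : F = E * diagonal μ * E⁻¹) (hμ0 : ∀ i, μ i ≠ 0)
    (hmult : ∀ c, 3 * Nat.card {i // μ i = c} ≤ 2 * Fintype.card n) :
    IsUnit ((1 : Matrix (Fin 3) (Fin 3) K) ⊗ₖ F) ∧
    ∃ V W : Matrix (Fin 3 × n) n K,
      IsUnit (threeCols V (((1 : Matrix (Fin 3) (Fin 3) K) ⊗ₖ F) * V) W) ∧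
      IsUnit (threeCols W (((1 : Matrix (Fin 3) (Fin 3) K) ⊗ₖ F)⁻¹ * W) V) := by
  have hFE : F * E = E * diagonal μ := by
    rw [hF, nonsing_inv_mul_cancel_right _ _ ((isUnit_iff_isUnit_det E).1 hE)]
  have hP : IsUnit ((1 : Matrix (Fin 3) (Fin 3) K) ⊗ₖ E) := isUnit_kronecker isUnit_one hE
  have hGP := one_kronecker_mul_eq_mul_diagonal (m := Fin 3) hFE
  have hD : IsUnit (diagonal fun p : Fin 3 × n => μ p.2) := by
    simp [isUnit_diagonal, Pi.isUnit_iff, hμ0]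
  exact ⟨(isUnit_iff_of_mul_eq_mul hP hGP).2 hD,
    exists_isUnit_threeCols_of_card_eigenvalue_le hP hGP (fun p => hμ0 p.2) fun c => by
      simpa [card_fiber_comp_snd] using hmult c⟩

end EigenvalueMultiplicity

theorem stmt_8 (M : ℕ) (hM : 0 < M) (F E : Matrix (Fin M) (Fin M) ℂ)
    (μ : Fin M → ℂ) (hE : IsUnit E) (hF : F = E * Matrix.diagonal μ * E⁻¹)
    (hμ0 : ∀ i, μ i ≠ 0)
    (hmult : ∀ c : ℂ, 3 * Nat.card {i : Fin M // μ i = c} ≤ 2 * M)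
    (Fbar : Matrix (Fin 3 × Fin M) (Fin 3 × Fin M) ℂ)
    (hFbar : ∀ (r s : Fin 3) (i j : Fin M),
      Fbar (r, i) (s, j) = if r = s then F i j else 0) :
    IsUnit Fbar ∧
    ∃ V11 V21 : Matrix (Fin 3 × Fin M) (Fin M) ℂ,
      IsUnit (Matrix.of fun (p q : Fin 3 × Fin M) =>
        if q.1 = 0 then V11 p q.2
        else if q.1 = 1 then (Fbar * V11) p q.2
        else V21 p q.2) ∧
      IsUnit (Matrix.of fun (p q : Fin 3 × Fin M) =>
        if q.1 = 0 then V21 p q.2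
        else if q.1 = 1 then (Fbar⁻¹ * V21) p q.2
        else V11 p q.2) := by
  obtain rfl : Fbar = 1 ⊗ₖ F := by ext ⟨r, i⟩ ⟨s, j⟩; simp [hFbar, one_apply]
  exact stmt_8_general hE hF hμ0 (by simpa using hmult)
end

section
/- Let M be an integer with M > 1 and let λ : Fin M → ℂ be injective with λ i ≠ 0 for all i. Define a complex matrix A with rows indexed by Fin 2 × Fin M and columns indexed by Fin 2 × Fin M as follows: A[(0,i),(0,j)] = 1 if i = j, else 0; A[(1,i),(0,j)] = 1 if i = j + 1 (addition in Fin M, i.e., cyclically), else 0; A[(0,i),(1,j)] = (λ i)⁻¹ if i = j, else 0; A[(1,i),(1,j)] = (λ i)⁻¹ if i = j + 1 (cyclically), else 0. Then A is invertible. -/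
/-!
The matrix is the block matrix with blocks `1, D` above `P, D * P`, where `D` is diagonal and `P` is
the permutation matrix of a permutation `σ`. Its Schur complement at the block `1` is the commutator
`⁅D, P⁆ = D * P - P * D`. Conjugating `D` by `P` permutes its diagonal, so `⁅D, P⁆` is `P` with its
rows scaled by the differences of diagonal entries of `D` along `σ`, and it is these differences
that have to be invertible.
-/

open Matrix

section BlockCommutator

variable {n R : Type*} [Fintype n] [DecidableEq n]

theorem isUnit_fromBlocks_one_mul_iff_isUnit_lie [CommRing R] (D P : Matrix n n R) :
    IsUnit (fromBlocks 1 D P (D * P)) ↔ IsUnit ⁅D, P⁆ := by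
  let _ : Invertible (1 : Matrix n n R) := invertibleOne
  rw [isUnit_fromBlocks_iff_of_invertible₁₁, invOf_one, mul_one, Ring.lie_def]

theorem lie_diagonal_permMatrix [Ring R] (d : n → R) (σ : Equiv.Perm n) :
    ⁅diagonal d, σ.permMatrix R⁆ = diagonal (fun i => d i - d (σ i)) * σ.permMatrix R := by
  ext i j
  rw [Ring.lie_def, Matrix.sub_apply, diagonal_mul, mul_diagonal, diagonal_mul]
  by_cases h : σ i = j <;> simp [PEquiv.toMatrix_apply, h]

theorem isUnit_permMatrix [Semiring R] (σ : Equiv.Perm n) : IsUnit (σ.permMatrix R) := by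
  simpa only [permMatrixHom_apply, inv_inv] using (Group.isUnit σ⁻¹).map (permMatrixHom (R := R))

theorem isUnit_lie_diagonal_permMatrix_iff [CommRing R] (d : n → R) (σ : Equiv.Perm n) :
    IsUnit ⁅diagonal d, σ.permMatrix R⁆ ↔ ∀ i, IsUnit (d i - d (σ i)) := by
  obtain ⟨u, hu⟩ := isUnit_permMatrix (R := R) σ
  rw [lie_diagonal_permMatrix, ← hu, Units.isUnit_mul_units, isUnit_diagonal, Pi.isUnit_iff]

end BlockCommutator

theorem fin_add_one_ne_self {M : ℕ} [NeZero M] (hM : 1 < M) (j : Fin M) : j + 1 ≠ j := by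
  simpa only [ne_eq, add_eq_left, Fin.one_eq_zero_iff] using hM.ne'

/-- The row and column indices `(0, i)` and `(1, i)` of a matrix of `2 × 2` blocks, as the left and
right summands that index `Matrix.fromBlocks`. -/
def finTwoProdEquivSum (n : Type*) : Fin 2 × n ≃ n ⊕ n :=
  (finTwoEquiv.prodCongr (Equiv.refl n)).trans (Equiv.boolProdEquivSum n)

theorem stmt_9_general {n R : Type*} [Fintype n] [DecidableEq n] [CommRing R]
    (σ : Equiv.Perm n) (d : n → R) (A : Matrix (Fin 2 × n) (Fin 2 × n) R)
    (hA : ∀ (a b : Fin 2) (i j : n),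
      A (a, i) (b, j) =
        if b = 0 then
          (if a = 0 then (if i = j then 1 else 0)
           else (if i = σ j then 1 else 0))
        else
          (if a = 0 then (if i = j then d i else 0)
           else (if i = σ j then d i else 0))) :
    IsUnit A ↔ ∀ j, IsUnit (d (σ j) - d j) := by
  let e := finTwoProdEquivSum n
  let P := σ⁻¹.permMatrix R
  have hblocks : A = (fromBlocks 1 (diagonal d) P (diagonal d * P)).submatrix e e := by
    ext ⟨a, i⟩ ⟨b, j⟩
    fin_cases a <;> fin_cases b <;>
      simp [hA, e, P, finTwoProdEquivSum, finTwoEquiv, Equiv.boolProdEquivSum, one_apply,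
        diagonal_apply, PEquiv.toMatrix_apply, Equiv.symm_apply_eq]
  rw [hblocks, isUnit_submatrix_equiv, isUnit_fromBlocks_one_mul_iff_isUnit_lie,
    isUnit_lie_diagonal_permMatrix_iff, ← σ.forall_congr_right]
  simp only [Equiv.Perm.inv_def, Equiv.symm_apply_apply]

theorem stmt_9 (M : ℕ) [NeZero M] (hM : 1 < M) (lam : Fin M → ℂ)
    (hinj : Function.Injective lam) (hne : ∀ i, lam i ≠ 0)
    (A : Matrix (Fin 2 × Fin M) (Fin 2 × Fin M) ℂ)
    (hA : ∀ (a b : Fin 2) (i j : Fin M),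
      A (a, i) (b, j) =
        if b = 0 then
          (if a = 0 then (if i = j then 1 else 0)
           else (if i = j + 1 then 1 else 0))
        else
          (if a = 0 then (if i = j then (lam i)⁻¹ else 0)
           else (if i = j + 1 then (lam i)⁻¹ else 0))) :
    IsUnit A := by
  exact (stmt_9_general (Equiv.addRight 1) (fun i => (lam i)⁻¹) A hA).2 fun j =>
    (sub_ne_zero.2 ((inv_injective.comp hinj).ne (fin_add_one_ne_self hM j))).isUnit
end

section
/- Let n and m be positive integers, let H be an n×m complex matrix such that Hᴴ·H is invertible (Hᴴ denoting the conjugate transpose), and let α be a nonnegative real number such that the m×m matrix I_m − α·(Hᴴ·H) is positive semidefinite. Define the n×n matrix K' = I_n − H·(Hᴴ·H)⁻¹·Hᴴ + α·(H·Hᴴ). Then both K' and I_n − K' are positive semidefinite. -/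
open Matrix ComplexOrder

/-!
Write `K = 1 - P + α H Hᴴ`, where `P = H (Hᴴ H)⁻¹ Hᴴ` is the orthogonal projection onto the column
space of `H`. Since `P H = H`, the cross terms of `K²` vanish and
`K - K² = α H (1 - α Hᴴ H) Hᴴ`, which is positive semidefinite. A Hermitian `K` with `K - K² ≽ 0`
satisfies `0 ≼ K ≼ 1`: indeed `K = Kᴴ K + (K - K²)`, and `K - K²` is unchanged when `K` is replaced
by `1 - K`.
-/

section Ring

variable {ι R : Type*} [Fintype ι] [Ring R] [PartialOrder R] [StarRing R] [StarOrderedRing R]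
  {K : Matrix ι ι R}

theorem posSemidef_of_posSemidef_sub_mul_self (hK : K.IsHermitian)
    (hKK : (K - K * K).PosSemidef) : K.PosSemidef := by
  have h : (Kᴴ * K + (K - K * K)).PosSemidef := (posSemidef_conjTranspose_mul_self K).add hKK
  rwa [hK.eq, add_sub_cancel] at h

theorem posSemidef_one_sub_of_posSemidef_sub_mul_self [DecidableEq ι] (hK : K.IsHermitian)
    (hKK : (K - K * K).PosSemidef) : (1 - K).PosSemidef := by
  have h : (1 - K) - (1 - K) * (1 - K) = K - K * K := by noncomm_ring
  exact posSemidef_of_posSemidef_sub_mul_self (isHermitian_one.sub hK) (h ▸ hKK)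

end Ring

section ColumnProjection

variable {ι κ R : Type*} [Fintype ι] [Fintype κ] [DecidableEq κ] [CommRing R] [StarRing R]
  {H : Matrix ι κ R}

/-- The orthogonal projection `H (Hᴴ H)⁻¹ Hᴴ` onto the column space of a matrix `H` of full column
rank. If `Hᴴ H` is not invertible, its inverse is `0` by convention, and so is this matrix. -/
noncomputable def columnProjection (H : Matrix ι κ R) : Matrix ι ι R :=
  H * (Hᴴ * H)⁻¹ * Hᴴ

theorem columnProjection_mul_self (hH : IsUnit (Hᴴ * H)) : columnProjection H * H = H := by
  have hinv : (Hᴴ * H)⁻¹ * (Hᴴ * H) = 1 := nonsing_inv_mul _ ((isUnit_iff_isUnit_det _).mp hH)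
  rw [columnProjection, Matrix.mul_assoc, Matrix.mul_assoc, hinv, Matrix.mul_one]

theorem isStarProjection_columnProjection (hH : IsUnit (Hᴴ * H)) :
    IsStarProjection (columnProjection H) where
  isIdempotentElem := calc
    columnProjection H * columnProjection H
      = columnProjection H * H * (Hᴴ * H)⁻¹ * Hᴴ := by
        simp only [columnProjection, Matrix.mul_assoc]
    _ = columnProjection H := by rw [columnProjection_mul_self hH, columnProjection]
  isSelfAdjoint :=
    isHermitian_mul_mul_conjTranspose H (isHermitian_conjTranspose_mul_self H).inv

end ColumnProjection

section ModifiedNoiseCov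

variable {ι κ R : Type*} [Fintype κ] [DecidableEq ι] [CommRing R] [StarRing R]
  {P : Matrix ι ι R} {H : Matrix ι κ R} {a : R}

/-- The modified noise covariance `K'` of the converse bound for the MIMO Z channel, with the
projection onto the column space of the channel matrix `H` replaced by an arbitrary matrix `P`. -/
def modifiedNoiseCov (P : Matrix ι ι R) (H : Matrix ι κ R) (a : R) : Matrix ι ι R :=
  1 - P + a • (H * Hᴴ)

theorem isHermitian_modifiedNoiseCov (hP : P.IsHermitian) (ha : IsSelfAdjoint a) :
    (modifiedNoiseCov P H a).IsHermitian :=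
  (isHermitian_one.sub hP).add ((isHermitian_mul_conjTranspose_self H).smul ha)

variable [Fintype ι] [DecidableEq κ]

theorem modifiedNoiseCov_sub_mul_self (hP : IsStarProjection P) (hPH : P * H = H) :
    modifiedNoiseCov P H a - modifiedNoiseCov P H a * modifiedNoiseCov P H a =
      a • (H * (1 - a • (Hᴴ * H)) * Hᴴ) := by
  have hHP : Hᴴ * P = Hᴴ := by
    simpa [hP.isSelfAdjoint.star_eq, ← star_eq_conjTranspose] using congrArg conjTranspose hPH
  have hQ : (1 - P) * (1 - P) = 1 - P := hP.one_sub.isIdempotentElem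
  have hQH : (1 - P) * (H * Hᴴ) = 0 := by
    rw [← Matrix.mul_assoc, Matrix.sub_mul, Matrix.one_mul, hPH, sub_self, Matrix.zero_mul]
  have hHQ : H * Hᴴ * (1 - P) = 0 := by
    rw [Matrix.mul_assoc, Matrix.mul_sub, Matrix.mul_one, hHP, sub_self, Matrix.mul_zero]
  have hsq : modifiedNoiseCov P H a * modifiedNoiseCov P H a =
      1 - P + a • a • (H * Hᴴ * (H * Hᴴ)) := by
    simp only [modifiedNoiseCov, Matrix.add_mul, Matrix.mul_add, Matrix.smul_mul, Matrix.mul_smul,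
      hQ, hQH, hHQ, smul_zero, add_zero, zero_add]
  rw [hsq, modifiedNoiseCov, add_sub_add_left_eq_sub]
  simp only [Matrix.mul_sub, Matrix.sub_mul, Matrix.mul_one, Matrix.mul_smul, Matrix.smul_mul,
    Matrix.mul_assoc, smul_sub]

variable [PartialOrder R] [StarOrderedRing R]

theorem posSemidef_modifiedNoiseCov_sub_mul_self (hP : IsStarProjection P) (hPH : P * H = H)
    (ha : 0 ≤ a) (haH : (1 - a • (Hᴴ * H)).PosSemidef) :
    (modifiedNoiseCov P H a - modifiedNoiseCov P H a * modifiedNoiseCov P H a).PosSemidef := by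
  rw [modifiedNoiseCov_sub_mul_self hP hPH]
  exact (haH.mul_mul_conjTranspose_same H).smul ha

theorem stmt_13_general (hP : IsStarProjection P) (hPH : P * H = H)
    (ha : 0 ≤ a) (haH : (1 - a • (Hᴴ * H)).PosSemidef) :
    (modifiedNoiseCov P H a).PosSemidef ∧ (1 - modifiedNoiseCov P H a).PosSemidef := by
  have hK : (modifiedNoiseCov P H a).IsHermitian :=
    isHermitian_modifiedNoiseCov hP.isSelfAdjoint (.of_nonneg ha)
  have hKK := posSemidef_modifiedNoiseCov_sub_mul_self hP hPH ha haH
  exact ⟨posSemidef_of_posSemidef_sub_mul_self hK hKK,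
    posSemidef_one_sub_of_posSemidef_sub_mul_self hK hKK⟩

end ModifiedNoiseCov

theorem stmt_13 (n m : ℕ) (hn : 0 < n) (hm : 0 < m)
    (H : Matrix (Fin n) (Fin m) ℂ) (hHH : IsUnit (Hᴴ * H))
    (α : ℝ) (hα : 0 ≤ α)
    (hαle : ((1 : Matrix (Fin m) (Fin m) ℂ) - (α : ℂ) • (Hᴴ * H)).PosSemidef) :
    ((1 : Matrix (Fin n) (Fin n) ℂ) - H * (Hᴴ * H)⁻¹ * Hᴴ +
        (α : ℂ) • (H * Hᴴ)).PosSemidef ∧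
    ((1 : Matrix (Fin n) (Fin n) ℂ) -
        ((1 : Matrix (Fin n) (Fin n) ℂ) - H * (Hᴴ * H)⁻¹ * Hᴴ +
          (α : ℂ) • (H * Hᴴ))).PosSemidef :=
  stmt_13_general (isStarProjection_columnProjection hHH) (columnProjection_mul_self hHH)
    (Complex.zero_le_real.mpr hα) hαle
end
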